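/- Let X be a proper metric space (every closed bounded subset of X is compact), p ∈ X, and Γ a pointwise-sequentially closed subgroup of the group of isometric equivalences of X. Then for every a > 0 there exists ε > 0 such that 𝒢(Γ, p, a) = 𝒢(Γ, p, a + ε). -/

import Mathlib

/-- `𝒢(Γ, p, r)`: the subgroup generated by the elements of `Γ` moving `p` a
distance at most `r`. -/
def genBelow {X : Type*} [MetricSpace X] (Γ : Subgroup (X ≃ᵢ X)) (p : X) (r : ℝ) :
    Subgroup (X ≃ᵢ X) :=
  Subgroup.closure {g : X ≃ᵢ X | g ∈ Γ ∧ dist (g p) p ≤ r}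

/-! If `x = g p` and `y = h p` are orbit points with `dist (h p) p ≤ a` and `dist x y ≤ a`, then
both `h` and `h⁻¹ * g` move `p` by at most `a`, so `g ∈ 𝒢(Γ, p, a)`. Hence every `g` carrying `p`
into the open `a`-neighbourhood of the orbit points in the ball of radius `a` lies in `𝒢(Γ, p, a)`.
The orbit points of the ball of radius `a + 1` outside this neighbourhood form a compact set, so
their distance to `p` is bounded below by some `a' > a`, and any `ε ≤ 1` with `a + ε < a'` works.
The compactness holds because orbits are closed, by Arzelà–Ascoli applied to the elements of `Γ` and
to their inverses. -/

open Filter Topology Metric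

section IsometryLimits

theorem isClosed_setOf_isometry {X Y : Type*} [PseudoEMetricSpace X] [PseudoEMetricSpace Y] :
    IsClosed {f : X → Y | Isometry f} := by
  simp only [Isometry, Set.ofPred_forall]
  exact isClosed_iInter fun x => isClosed_iInter fun y =>
    isClosed_eq ((continuous_apply x).edist (continuous_apply y)) continuous_const

theorem isCompact_setOf_isometry_dist_le {X Y : Type*} [PseudoMetricSpace X]
    [PseudoMetricSpace Y] [ProperSpace Y] (p : X) (q : Y) (r : ℝ) :
    IsCompact {f : X → Y | Isometry f ∧ dist (f p) q ≤ r} := by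
  have compact_pi : IsCompact (Set.univ.pi fun x : X => closedBall q (dist x p + r)) :=
    isCompact_univ_pi fun x => isCompact_closedBall q (dist x p + r)
  refine compact_pi.of_isClosed_subset (isClosed_setOf_isometry.inter
    (isClosed_le ((continuous_apply p).dist continuous_const) continuous_const)) ?_
  rintro f ⟨hf, hfp⟩ x -
  calc dist (f x) q ≤ dist (f x) (f p) + dist (f p) q := dist_triangle _ _ _
    _ ≤ dist x p + r := by rw [hf.dist_eq]; gcongr

theorem isCompact_continuousMap_setOf_isometry_dist_le {X Y : Type*} [PseudoMetricSpace X]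
    [PseudoMetricSpace Y] [ProperSpace Y] (p : X) (q : Y) (r : ℝ) :
    IsCompact {f : C(X, Y) | Isometry f ∧ dist (f p) q ≤ r} := by
  apply ArzelaAscoli.isCompact_of_equicontinuous
  · convert isCompact_setOf_isometry_dist_le p q r using 1
    ext f
    exact ⟨by rintro ⟨g, hg, rfl⟩; exact hg, fun hf => ⟨⟨f, hf.1.continuous⟩, hf, rfl⟩⟩
  · exact (LipschitzWith.uniformEquicontinuous _ 1 fun f => f.2.1.lipschitz).equicontinuous

theorem exists_subseq_tendsto_isometry {X Y : Type*} [PseudoMetricSpace X]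
    [WeaklyLocallyCompactSpace X] [SigmaCompactSpace X] [PseudoMetricSpace Y] [ProperSpace Y]
    {f : ℕ → X → Y} (hf : ∀ n, Isometry (f n)) {p : X} {q : Y} {r : ℝ}
    (hr : ∀ n, dist (f n p) q ≤ r) :
    ∃ u : X → Y, Isometry u ∧ ∃ φ : ℕ → ℕ, StrictMono φ ∧
      ∀ x, Tendsto (fun n => f (φ n) x) atTop (𝓝 (u x)) := by
  obtain ⟨u, ⟨hu, -⟩, φ, hφ, hlim⟩ :=
    (isCompact_continuousMap_setOf_isometry_dist_le p q r).tendsto_subseq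
      (x := fun n => ⟨f n, (hf n).continuous⟩) fun n => ⟨hf n, hr n⟩
  exact ⟨u, hu, φ, hφ, fun x => ((continuous_eval_const x).tendsto u).comp hlim⟩

theorem rightInverse_of_tendsto_isometryEquiv {X Y ι : Type*} [PseudoMetricSpace X] [MetricSpace Y]
    {l : Filter ι} [l.NeBot] {f : ι → X ≃ᵢ Y} {u : X → Y} {v : Y → X}
    (hu : ∀ x, Tendsto (fun i => f i x) l (𝓝 (u x)))
    (hv : ∀ y, Tendsto (fun i => (f i).symm y) l (𝓝 (v y))) :
    Function.RightInverse v u := by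
  intro y
  refine tendsto_nhds_unique (hu (v y)) (tendsto_iff_dist_tendsto_zero.2 ?_)
  refine (tendsto_iff_dist_tendsto_zero.1 (hv y)).congr fun i => ?_
  rw [← (f i).dist_eq, IsometryEquiv.apply_symm_apply, dist_comm]

theorem exists_subseq_tendsto_isometryEquiv {X Y : Type*} [MetricSpace X] [ProperSpace X]
    [MetricSpace Y] [ProperSpace Y] {f : ℕ → X ≃ᵢ Y} {p : X} {q : Y} {r : ℝ}
    (hr : ∀ n, dist (f n p) q ≤ r) :
    ∃ h : X ≃ᵢ Y, ∃ φ : ℕ → ℕ, StrictMono φ ∧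
      ∀ x, Tendsto (fun n => f (φ n) x) atTop (𝓝 (h x)) := by
  obtain ⟨u, u_isometry, φ, hφ, hu⟩ :=
    exists_subseq_tendsto_isometry (fun n => (f n).isometry) hr
  have symm_bound (n : ℕ) : dist ((f (φ n)).symm q) p ≤ r := by
    rw [← (f (φ n)).dist_eq, IsometryEquiv.apply_symm_apply, dist_comm]
    exact hr (φ n)
  obtain ⟨v, -, ψ, hψ, hv⟩ :=
    exists_subseq_tendsto_isometry (fun n => (f (φ n)).symm.isometry) symm_bound
  have huψ (x : X) : Tendsto (fun n => f (φ (ψ n)) x) atTop (𝓝 (u x)) :=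
    (hu x).comp hψ.tendsto_atTop
  exact ⟨IsometryEquiv.mk' u v (rightInverse_of_tendsto_isometryEquiv huψ hv) u_isometry,
    φ ∘ ψ, hφ.comp hψ, huψ⟩

end IsometryLimits

/-- The orbit `Γ p` of the point `p` under the group `Γ` of isometries. -/
def isometryOrbit {X : Type*} [PseudoEMetricSpace X] (Γ : Subgroup (X ≃ᵢ X)) (p : X) : Set X :=
  (fun g : X ≃ᵢ X => g p) '' Γ

theorem isClosed_isometryOrbit {X : Type*} [MetricSpace X] [ProperSpace X]
    {Γ : Subgroup (X ≃ᵢ X)}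
    (hclosed : ∀ g : ℕ → (X ≃ᵢ X), (∀ n, g n ∈ Γ) → ∀ h : X ≃ᵢ X,
      (∀ x : X, Tendsto (fun n => g n x) atTop (𝓝 (h x))) → h ∈ Γ) (p : X) :
    IsClosed (isometryOrbit Γ p) := by
  refine IsSeqClosed.isClosed fun y x hy hyx => ?_
  choose g hgΓ hgp using hy
  obtain rfl : (fun n => g n p) = y := funext hgp
  obtain ⟨r, hr⟩ := (isBounded_range_of_tendsto _ hyx).subset_closedBall p
  obtain ⟨h, φ, hφ, hlim⟩ :=
    exists_subseq_tendsto_isometryEquiv fun n => hr (Set.mem_range_self n)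
  exact ⟨h, hclosed _ (fun n => hgΓ (φ n)) h hlim,
    tendsto_nhds_unique (hlim p) (hyx.comp hφ.tendsto_atTop)⟩

section GenBelow

variable {X : Type*} [MetricSpace X] {Γ : Subgroup (X ≃ᵢ X)} {p : X}

theorem mem_genBelow {r : ℝ} {g : X ≃ᵢ X} (hg : g ∈ Γ) (hr : dist (g p) p ≤ r) :
    g ∈ genBelow Γ p r :=
  Subgroup.subset_closure ⟨hg, hr⟩

theorem genBelow_mono {r s : ℝ} (hrs : r ≤ s) : genBelow Γ p r ≤ genBelow Γ p s :=
  Subgroup.closure_mono fun _ hg => ⟨hg.1, hg.2.trans hrs⟩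

theorem mem_genBelow_of_dist_le {r : ℝ} {g h : X ≃ᵢ X} (hg : g ∈ Γ) (hh : h ∈ Γ)
    (hp : dist (h p) p ≤ r) (hgh : dist (g p) (h p) ≤ r) : g ∈ genBelow Γ p r := by
  have moves_le : dist ((h⁻¹ * g) p) p ≤ r := by
    rwa [← h.dist_eq, IsometryEquiv.mul_apply, IsometryEquiv.apply_inv_self]
  rw [← mul_inv_cancel_left h g]
  exact mul_mem (mem_genBelow hh hp) (mem_genBelow (mul_mem (inv_mem hh) hg) moves_le)

theorem mem_genBelow_of_mem_thickening {r : ℝ} {g : X ≃ᵢ X} (hg : g ∈ Γ)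
    (hgp : g p ∈ thickening r (isometryOrbit Γ p ∩ closedBall p r)) : g ∈ genBelow Γ p r := by
  obtain ⟨_, ⟨⟨h, hh, rfl⟩, hp⟩, hgh⟩ := mem_thickening_iff.1 hgp
  exact mem_genBelow_of_dist_le hg hh hp hgh.le

theorem gen_stabilizes_general {a R : ℝ} (ha : 0 < a) (haR : a < R)
    (hcompact : IsCompact (isometryOrbit Γ p ∩ closedBall p R)) :
    ∃ ε : ℝ, 0 < ε ∧ genBelow Γ p a = genBelow Γ p (a + ε) := by
  let U := thickening a (isometryOrbit Γ p ∩ closedBall p a)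
  have far : ∀ x ∈ (isometryOrbit Γ p ∩ closedBall p R) \ U, a < dist x p := fun x hx =>
    lt_of_not_ge fun hxa => hx.2 (self_subset_thickening ha _ ⟨hx.1.1, hxa⟩)
  obtain ⟨a', haa', ha'⟩ := (hcompact.diff isOpen_thickening).exists_forall_le'
    (continuous_id.dist continuous_const).continuousOn far
  obtain ⟨s, has, hs⟩ := exists_between (lt_min haa' haR)
  obtain ⟨hsa', hsR⟩ := lt_min_iff.1 hs
  refine ⟨s - a, sub_pos.2 has, ?_⟩
  rw [add_sub_cancel]
  refine le_antisymm (genBelow_mono has.le) ((Subgroup.closure_le _).2 ?_)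
  rintro g ⟨hg, hgs⟩
  refine mem_genBelow_of_mem_thickening hg (by_contra fun hgU => ?_)
  exact (hgs.trans_lt hsa').not_ge (ha' (g p) ⟨⟨⟨g, hg, rfl⟩, hgs.trans hsR.le⟩, hgU⟩)

end GenBelow

/-- **Unnumbered Proposition (Section 'Group norms').**
Let `X` be a proper metric space, `p ∈ X`, and `Γ` a pointwise-sequentially
closed subgroup of the isometry group of `X`.  Then for every `a > 0` one has
`𝒢(Γ, p, a) = 𝒢(Γ, p, a + ε)` for `ε > 0` small enough. -/
theorem gen_stabilizes (X : Type*) [MetricSpace X] [ProperSpace X] (p : X)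
    (Γ : Subgroup (X ≃ᵢ X))
    (hclosed : ∀ g : ℕ → (X ≃ᵢ X), (∀ n, g n ∈ Γ) → ∀ h : X ≃ᵢ X,
      (∀ x : X, Filter.Tendsto (fun n => g n x) Filter.atTop (nhds (h x))) →
      h ∈ Γ) :
    ∀ a : ℝ, 0 < a → ∃ ε : ℝ, 0 < ε ∧ genBelow Γ p a = genBelow Γ p (a + ε) := by
  intro a ha
  exact gen_stabilizes_general ha (lt_add_one a)
    ((isCompact_closedBall p (a + 1)).inter_left (isClosed_isometryOrbit hclosed p))
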